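/- Let m be a positive half-integer. For τ in the upper half-plane and z1, z2, z3 ∈ ℂ such that none of z1, z2, z3, z1−z2−z3 lies in ℤ + ℤτ, the following identity holds: θ_{0,m+1}(τ, ((z1−z2)+m(z1+z3))/(m+1)) · Φ^{[m,0]}(τ, z1, −z3, 0) − θ_{0,m+1}(τ, ((z1−z2)+m(z1−2z2−z3))/(m+1)) · Φ^{[m,0]}(τ, z2, z1−z2−z3, 0) + Σ_{j>0} Σ_{k=1}^{2mj} q^{(m+1)j²} q^{−k²/(4m)} P^{[m]}_{j,k}(z1,z2,z3) [θ_{k,m} − θ_{−k,m}](τ, z1−z3) = i θ_{0,m+1}(τ, ((z1+z2)+m(z1−z3))/(m+1)) · η(τ)³ ϑ_{11}(τ, z1−z2) / (ϑ_{11}(τ, z1) ϑ_{11}(τ, z2)) + i θ_{0,m+1}(τ, ((z1−z2−2z3)+m(z1−z3))/(m+1)) · η(τ)³ ϑ_{11}(τ, z1−z2) / (ϑ_{11}(τ, z3) ϑ_{11}(τ, z1−z2−z3)), where P^{[m]}_{j,k}(z1,z2,z3) := e^{2πij(z1−z2)} e^{πi(2mj−k)(z1−2z2−z3)} + e^{−2πij(z1−z2)}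 e^{−πi(2mj−k)(z1−2z2−z3)} − e^{2πij(z1−z2)} e^{πi(2mj−k)(z1+z3)} − e^{−2πij(z1−z2)} e^{−πi(2mj−k)(z1+z3)}, and in the double sum j runs over the positive integers and k over the integers 1, …, 2mj. -/

import Mathlib

open Complex

noncomputable section

namespace Wakimoto

/-- `qpow τ x = e^{2πiτx}`, i.e. `q^x` where `q = e^{2πiτ}`. -/
def qpow (τ x : ℂ) : ℂ := Complex.exp (2 * Real.pi * Complex.I * τ * x)

/-- `e2 z = e^{2πiz}`. -/
def e2 (z : ℂ) : ℂ := Complex.exp (2 * Real.pi * Complex.I * z)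

/-- The mock theta function `Φ^{[m,s]}_1`. -/
def Phi1 (m s : ℂ) (τ z1 z2 t : ℂ) : ℂ :=
  Complex.exp (-(2 * Real.pi * Complex.I) * m * t) *
    ∑' j : ℤ,
      Complex.exp (2 * Real.pi * Complex.I * (m * (j : ℂ) * (z1 + z2) + s * z1)) *
          qpow τ (m * (j : ℂ) ^ 2 + s * (j : ℂ)) /
        (1 - e2 z1 * qpow τ (j : ℂ))

/-- The mock theta function `Φ^{[m,s]}_2`. -/
def Phi2 (m s : ℂ) (τ z1 z2 t : ℂ) : ℂ :=
  Complex.exp (-(2 * Real.pi * Complex.I) * m * t) *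
    ∑' j : ℤ,
      Complex.exp (-(2 * Real.pi * Complex.I) * (m * (j : ℂ) * (z1 + z2) + s * z2)) *
          qpow τ (m * (j : ℂ) ^ 2 + s * (j : ℂ)) /
        (1 - e2 (-z2) * qpow τ (j : ℂ))

/-- `Φ^{[m,s]} = Φ^{[m,s]}_1 - Φ^{[m,s]}_2`. -/
def Phi (m s : ℂ) (τ z1 z2 t : ℂ) : ℂ :=
  Phi1 m s τ z1 z2 t - Phi2 m s τ z1 z2 t

/-- Jacobi's theta function `θ_{k,m}`. -/
def jTheta (k m : ℂ) (τ z : ℂ) : ℂ :=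
  ∑' j : ℤ,
    Complex.exp (2 * Real.pi * Complex.I * (m * ((j : ℂ) + k / (2 * m)) * z)) *
      qpow τ (m * ((j : ℂ) + k / (2 * m)) ^ 2)

/-- The signed theta function `θ^{(-)}_{k,m}`. -/
def jThetaM (k m : ℂ) (τ z : ℂ) : ℂ :=
  ∑' j : ℤ,
    (-1 : ℂ) ^ j *
      Complex.exp (2 * Real.pi * Complex.I * (m * ((j : ℂ) + k / (2 * m)) * z)) *
      qpow τ (m * ((j : ℂ) + k / (2 * m)) ^ 2)

/-- The Dedekind eta function. -/
def eta (τ : ℂ) : ℂ := qpow τ (1 / 24) * ∏' n : ℕ, (1 - qpow τ ((n : ℂ) + 1))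

/-- The Mumford theta functions `ϑ_{ab}`. -/
def mumford (a b : ℕ) (τ z : ℂ) : ℂ :=
  ∑' n : ℤ,
    Complex.exp (Real.pi * Complex.I * τ * ((n : ℂ) + (a : ℂ) / 2) ^ 2 +
      2 * Real.pi * Complex.I * ((n : ℂ) + (a : ℂ) / 2) * (z + (b : ℂ) / 2))

/-- `z` lies in the lattice `ℤ + ℤτ`. -/
def InLattice (τ z : ℂ) : Prop := ∃ a b : ℤ, z = (a : ℂ) + (b : ℂ) * τ

/-! Let `w = z1 - z2 - z3`, `c = m(z1 - z3)` and `d = z1 - z2`. One has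
`Φ^{[m,0]}(τ, p, -r, 0) = A_c(p) - A_{-c}(r)` whenever `m(p - r) = c`, where `A_c` is an
Appell–Lerch sum. Form the absolutely convergent double sums
`S_{c,d}(p) = ∑ n, e^{2πind} q^{n²} A_c(p + nτ)`.

Since `Φ^{[m,0]}` is quasi-periodic under `(p, r) ↦ (p + nτ, r + nτ)` up to multiples of
`θ_{k,m} - θ_{-k,m}`, the differences `S_{c,d}(z1) - S_{-c,d}(z3)` and
`S_{c,-d}(z2) - S_{-c,-d}(-w)` are theta functions times `Φ^{[m,0]}`, up to double sums of such
multiples. Pairing the same four sums as `S_{c,d}(z1) - S_{c,-d}(z2)` and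
`S_{-c,d}(z3) - S_{-c,-d}(-w)` and exchanging the order of summation gives theta series whose
coefficients are differences of level one Appell–Lerch sums. These differences are theta quotients,
by partial fraction expansion of finite products followed by a passage to the limit. -/

section QPochhammer

open Finset.HasAntidiagonal (antidiagonal mem_antidiagonal)

section CommRing

variable {R : Type*} [CommRing R] (q a : R)

/-- The finite `q`-Pochhammer symbol `(a; q)_n`. -/
def qPoch (n : ℕ) : R := ∏ i ∈ Finset.range n, (1 - a * q ^ i)

lemma qPoch_zero : qPoch q a 0 = 1 := Finset.prod_range_zero _

lemma qPoch_succ (n : ℕ) : qPoch q a (n + 1) = qPoch q a n * (1 - a * q ^ n) :=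
  Finset.prod_range_succ _ _

lemma qPoch_succ' (n : ℕ) : qPoch q a (n + 1) = (1 - a) * qPoch q (a * q) n := by
  simp only [qPoch, Finset.prod_range_succ', pow_succ', pow_zero, mul_one, mul_assoc]
  rw [mul_comm]

lemma qPoch_add (m n : ℕ) : qPoch q a (m + n) = qPoch q a m * qPoch q (a * q ^ m) n := by
  simp only [qPoch, Finset.prod_range_add, pow_add, mul_assoc]

end CommRing

variable {K : Type*} [Field K] {q : K}

lemma qPoch_ne_zero {a : K} (h : ∀ i : ℕ, a * q ^ i ≠ 1) (n : ℕ) : qPoch q a n ≠ 0 :=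
  Finset.prod_ne_zero_iff.2 fun i _ ↦ sub_ne_zero.2 (h i).symm

lemma qPoch_div_pow (hq : q ≠ 0) {c : K} (hc : c ≠ 0) (n : ℕ) :
    qPoch q (c / q ^ n) n = (-c) ^ n / q ^ (n + 1).choose 2 * qPoch q (q / c) n := by
  induction n with
  | zero => simp [qPoch_zero]
  | succ n ih =>
    rw [qPoch_succ', show c / q ^ (n + 1) * q = c / q ^ n by
        field_simp
        rw [pow_succ'], ih, qPoch_succ,
      Nat.choose_succ_succ' (n + 1) 1, Nat.choose_one_right, pow_add]
    field_simp
    ring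

/-- The partial product `(X; q)_m (q / X; q)_n` of the theta product
`(X; q)_∞ (q / X; q)_∞`. -/
def qThetaPartial (q X : K) (m n : ℕ) : K := qPoch q X m * qPoch q (q / X) n

lemma qPoch_div_pow_add (hq : q ≠ 0) {c : K} (hc : c ≠ 0) (m n : ℕ) :
    qPoch q (c / q ^ m) (m + n) =
      (-c) ^ m / q ^ (m + 1).choose 2 * qThetaPartial q c n m := by
  rw [qPoch_add, qPoch_div_pow hq hc, div_mul_cancel₀ c (pow_ne_zero m hq), qThetaPartial]
  ring

lemma prod_range_erase {M : Type*} [CommMonoid M] (f : ℕ → M) (m n : ℕ) :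
    ∏ j ∈ (Finset.range (m + n + 1)).erase m, f j =
      (∏ j ∈ Finset.range m, f j) * ∏ j ∈ Finset.range n, f (m + 1 + j) := by
  induction n with
  | zero => simp [Finset.range_add_one]
  | succ n ih =>
    rw [Finset.range_add_one, Finset.erase_insert_of_ne (by omega), Finset.prod_insert (by simp),
      ← add_assoc, ih, Finset.prod_range_succ, mul_comm, mul_assoc, add_right_comm m 1 n]

lemma prod_range_erase_one_sub_div (hq : q ≠ 0) (m n : ℕ) :
    ∏ j ∈ (Finset.range (m + n + 1)).erase m, (1 - q ^ j / q ^ m) =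
      (-1) ^ m / q ^ (m + 1).choose 2 * (qPoch q q m * qPoch q q n) := by
  have hlow : ∏ j ∈ Finset.range m, (1 - q ^ j / q ^ m) = qPoch q (1 / q ^ m) m := by
    simp only [qPoch, one_div_mul_eq_div]
  have hhigh (j : ℕ) : 1 - q ^ (m + 1 + j) / q ^ m = 1 - q * q ^ j := by
    field_simp
    ring
  simp only [prod_range_erase, hhigh]
  rw [hlow, qPoch_div_pow hq one_ne_zero, div_one, ← qPoch]
  ring

section QBinomial

open Finset.Nat

lemma qPoch_self_ne_zero_factor (hq : ∀ n, qPoch q q n ≠ 0) (n : ℕ) : 1 - q ^ (n + 1) ≠ 0 := by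
  have h := hq (n + 1)
  rw [qPoch_succ, ← pow_succ'] at h
  exact right_ne_zero_of_mul h

theorem qPoch_eq_sum_antidiagonal (hq : ∀ n, qPoch q q n ≠ 0) (x : K) (n : ℕ) :
    qPoch q x n = qPoch q q n * ∑ p ∈ antidiagonal n,
      q ^ p.1.choose 2 * (-x) ^ p.1 / (qPoch q q p.1 * qPoch q q p.2) := by
  set u : ℕ → K := fun a ↦ q ^ a.choose 2 * (-x) ^ a / qPoch q q a with hu
  set v : ℕ → K := fun b ↦ (qPoch q q b)⁻¹ with hv
  have hu_succ (a : ℕ) : (1 - q ^ (a + 1)) * u (a + 1) = -x * q ^ a * u a := by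
    have := hq a
    have := qPoch_self_ne_zero_factor hq a
    simp only [hu, qPoch_succ, ← pow_succ', Nat.choose_succ_succ' a 1, Nat.choose_one_right]
    field_simp
    ring
  have hv_succ (b : ℕ) : (1 - q ^ (b + 1)) * v (b + 1) = v b := by
    have := hq b
    have := qPoch_self_ne_zero_factor hq b
    simp only [hv, qPoch_succ, ← pow_succ']
    field_simp
  have hsum (n : ℕ) : (1 - q ^ (n + 1)) * ∑ p ∈ antidiagonal (n + 1), u p.1 * v p.2 =
      (1 - x * q ^ n) * ∑ p ∈ antidiagonal n, u p.1 * v p.2 := by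
    have hsplit : ∀ p ∈ antidiagonal (n + 1), (1 - q ^ (n + 1)) * (u p.1 * v p.2) =
        q ^ p.2 * ((1 - q ^ p.1) * u p.1) * v p.2 + u p.1 * ((1 - q ^ p.2) * v p.2) := by
      intro p hp
      rw [← mem_antidiagonal.1 hp, pow_add]
      ring
    rw [Finset.mul_sum, Finset.sum_congr rfl hsplit, Finset.sum_add_distrib, sum_antidiagonal_succ,
      sum_antidiagonal_succ']
    simp only [hu_succ, hv_succ, pow_zero, sub_self, zero_mul, mul_zero, zero_add,
      Finset.mul_sum, ← Finset.sum_add_distrib]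
    refine Finset.sum_congr rfl fun p hp ↦ ?_
    rw [← mem_antidiagonal.1 hp, pow_add]
    ring
  have hterm (p : ℕ × ℕ) :
      q ^ p.1.choose 2 * (-x) ^ p.1 / (qPoch q q p.1 * qPoch q q p.2) = u p.1 * v p.2 := by
    rw [div_mul_eq_div_div, div_eq_mul_inv _ (qPoch q q p.2)]
  simp only [hterm]
  induction n with
  | zero => simp [qPoch_zero, hu, hv]
  | succ n ih =>
    rw [qPoch_succ q q, ← pow_succ', mul_assoc, hsum, qPoch_succ, ih]
    ring

end QBinomial

lemma two_mul_choose_two (n : ℕ) : 2 * (n.choose 2 : ℤ) = n * (n - 1) := by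
  induction n with
  | zero => simp
  | succ n ih =>
    rw [Nat.choose_succ_succ' n 1, Nat.choose_one_right]
    push_cast
    linear_combination ih

theorem qThetaPartial_eq_sum_antidiagonal {p z : K} (hp : p ≠ 0) (hz : z ≠ 0)
    (hq : ∀ n, qPoch (p ^ 2) (p ^ 2) n ≠ 0) (N : ℕ) :
    qThetaPartial (p ^ 2) (-p * z) N N = qPoch (p ^ 2) (p ^ 2) (2 * N) *
      ∑ ab ∈ antidiagonal (2 * N), p ^ (((ab.1 : ℤ) - N) ^ 2) * z ^ ((ab.1 : ℤ) - N) *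
        (qPoch (p ^ 2) (p ^ 2) ab.1 * qPoch (p ^ 2) (p ^ 2) ab.2)⁻¹ := by
  have hpz : -p * z ≠ 0 := mul_ne_zero (neg_ne_zero.2 hp) hz
  set c : K := (-(-p * z)) ^ N / (p ^ 2) ^ (N + 1).choose 2 with hc
  have hc0 : c ≠ 0 := div_ne_zero (pow_ne_zero _ (neg_ne_zero.2 hpz))
    (pow_ne_zero _ (pow_ne_zero 2 hp))
  have hmono (a : ℕ) : (p ^ 2) ^ a.choose 2 * (-(-p * z / (p ^ 2) ^ N)) ^ a =
      c * (p ^ (((a : ℤ) - N) ^ 2) * z ^ ((a : ℤ) - N)) := by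
    have hexp : ((a : ℤ) - N) ^ 2 = (2 * a.choose 2 : ℕ) + a + (2 * (N + 1).choose 2 : ℕ)
        - (2 * N * a : ℕ) - N := by
      have := two_mul_choose_two a
      have := two_mul_choose_two (N + 1)
      push_cast at *
      linarith
    simp only [hexp, zpow_sub₀ hp, zpow_add₀ hp, zpow_sub₀ hz, zpow_natCast, hc, pow_mul, mul_pow,
      neg_mul, neg_div, neg_neg, div_pow]
    field_simp
  have hbin := qPoch_eq_sum_antidiagonal hq (-p * z / (p ^ 2) ^ N) (2 * N)
  simp only [hmono] at hbin
  rw [two_mul N, qPoch_div_pow_add (pow_ne_zero 2 hp) hpz] at hbin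
  refine mul_left_cancel₀ hc0 (hbin.trans ?_)
  simp only [Finset.mul_sum]
  refine Finset.sum_congr (by rw [two_mul]) fun ab _ ↦ ?_
  rw [two_mul]
  ring

section PartialFractions

open Polynomial in
/-- Lagrange interpolation of `X ^ k` at the nodes `(a i)⁻¹`, evaluated at `1`. -/
lemma sum_inv_pow_mul_prod_erase {ι : Type*} [DecidableEq ι] {s : Finset ι} {a : ι → K}
    (ha : Set.InjOn a s) (ha0 : ∀ i ∈ s, a i ≠ 0) {k : ℕ} (hk : k < s.card) :
    ∑ i ∈ s, (a i)⁻¹ ^ k * ∏ j ∈ s.erase i, (1 - a j) / (1 - a j / a i) = 1 := by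
  have hnodes : Set.InjOn (fun i ↦ (a i)⁻¹) s := fun i hi j hj h ↦ ha hi hj (inv_injective h)
  have hinterp := Lagrange.eq_interpolate_of_eval_eq (f := (X ^ k : K[X])) (fun i ↦ (a i)⁻¹ ^ k)
    hnodes (by rw [degree_X_pow]; exact_mod_cast hk) (by simp)
  have heval := congrArg (eval 1) hinterp
  rw [Lagrange.interpolate_apply, eval_finsetSum, eval_pow, eval_X, one_pow] at heval
  refine (Finset.sum_congr rfl fun i hi ↦ ?_).trans heval.symm
  rw [eval_mul, eval_C, Lagrange.basis, eval_prod]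
  congr 1
  refine Finset.prod_congr rfl fun j hj ↦ ?_
  have hij : a i - a j ≠ 0 := sub_ne_zero.2 fun h ↦
    Finset.ne_of_mem_erase hj (ha hi (Finset.mem_of_mem_erase hj) h).symm
  have hi0 := ha0 i hi
  have hj0 := ha0 j (Finset.mem_of_mem_erase hj)
  simp only [Lagrange.basisDivisor, eval_mul, eval_C, eval_sub, eval_X]
  rw [show (a i)⁻¹ - (a j)⁻¹ = -((a i - a j) / (a i * a j)) by field_simp; ring]
  field_simp
  ring

lemma prod_one_sub_inv_eq_sum {ι : Type*} [DecidableEq ι] {s : Finset ι} {a : ι → K}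
    (ha : Set.InjOn a s) (ha0 : ∀ i ∈ s, a i ≠ 0) (ha1 : ∀ i ∈ s, a i ≠ 1) {k : ℕ}
    (hk : k < s.card) :
    (∏ i ∈ s, (1 - a i))⁻¹ =
      ∑ i ∈ s, (a i)⁻¹ ^ k / ((1 - a i) * ∏ j ∈ s.erase i, (1 - a j / a i)) := by
  refine inv_eq_of_mul_eq_one_right ?_
  rw [Finset.mul_sum]
  refine (Finset.sum_congr rfl fun i hi ↦ ?_).trans (sum_inv_pow_mul_prod_erase ha ha0 hk)
  have := sub_ne_zero.2 (ha1 i hi).symm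
  rw [← Finset.mul_prod_erase s _ hi, Finset.prod_div_distrib]
  field_simp

lemma prod_mul_prod_one_sub_inv_eq_sum {ι : Type*} [DecidableEq ι] {s : Finset ι} {a b : ι → K}
    (ha : Set.InjOn a s) (hb : Set.InjOn b s) (hab : ∀ i ∈ s, ∀ j ∈ s, a i ≠ b j)
    (ha0 : ∀ i ∈ s, a i ≠ 0) (hb0 : ∀ i ∈ s, b i ≠ 0)
    (ha1 : ∀ i ∈ s, a i ≠ 1) (hb1 : ∀ i ∈ s, b i ≠ 1) {k : ℕ} (hk : k < 2 * s.card) :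
    ((∏ i ∈ s, (1 - a i)) * ∏ i ∈ s, (1 - b i))⁻¹ = ∑ i ∈ s,
      ((a i)⁻¹ ^ k / ((1 - a i) *
          ((∏ j ∈ s.erase i, (1 - a j / a i)) * ∏ j ∈ s, (1 - b j / a i))) +
        (b i)⁻¹ ^ k / ((1 - b i) *
          ((∏ j ∈ s.erase i, (1 - b j / b i)) * ∏ j ∈ s, (1 - a j / b i)))) := by
  have herase_inl (i : ι) : (s.disjSum s).erase (Sum.inl i) = (s.erase i).disjSum s := by
    ext (j | j) <;> simp
  have herase_inr (i : ι) : (s.disjSum s).erase (Sum.inr i) = s.disjSum (s.erase i) := by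
    ext (j | j) <;> simp
  have h := prod_one_sub_inv_eq_sum (s := s.disjSum s) (a := Sum.elim a b) (k := k)
    ?_ (by simpa using ⟨ha0, hb0⟩) (by simpa using ⟨ha1, hb1⟩) (by simpa [two_mul] using hk)
  · simpa only [Finset.sum_disjSum, Finset.prod_disjSum, herase_inl, herase_inr, Sum.elim_inl,
      Sum.elim_inr, Finset.sum_add_distrib, mul_comm (∏ j ∈ s, (1 - a j / b _))] using h
  · rintro (i | i) hi (j | j) hj h <;>
      simp only [Finset.mem_coe, Finset.inl_mem_disjSum, Finset.inr_mem_disjSum] at hi hj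
    · exact congrArg _ (ha hi hj h)
    · exact absurd h (hab i hi j hj)
    · exact absurd h.symm (hab j hj i hi)
    · exact congrArg _ (hb hi hj h)

end PartialFractions

/-- The summand of the level one Appell–Lerch sum `∑ n, (X / Y) ^ n q ^ n² / (1 - X q ^ n)`. -/
def qAppellTerm (q X Y : K) (n : ℤ) : K := (X / Y) ^ n * q ^ (n ^ 2) / (1 - X * q ^ n)

lemma inv_pow_node_eq {X Y : K} (hq : q ≠ 0) (hX : X ≠ 0) (hY : Y ≠ 0) (N a : ℕ) :
    (X * q ^ ((a : ℤ) - N))⁻¹ ^ (2 * N + 1) / ((-1) ^ a / q ^ (a + 1).choose 2 *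
        ((-(Y / X)) ^ a / q ^ (a + 1).choose 2)) =
      q ^ (2 * (N + 1).choose 2) / (X * Y) ^ N *
        (X⁻¹ * ((X / Y) ^ ((a : ℤ) - N) * q ^ (((a : ℤ) - N) ^ 2))) := by
  have hexp : ((a : ℤ) - N) ^ 2 = (2 * (a + 1).choose 2 : ℕ) + (N * (2 * N + 1) : ℕ)
      - (a * (2 * N + 1) : ℕ) - (2 * (N + 1).choose 2 : ℕ) := by
    have := two_mul_choose_two (a + 1)
    have := two_mul_choose_two (N + 1)
    push_cast at *
    linarith
  have hsign : ((-1 : K) ^ a) * (-1) ^ a = 1 := by rw [← mul_pow]; simp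
  rw [neg_pow (Y / X), hexp, div_mul_div_comm, ← mul_assoc, hsign]
  simp only [zpow_sub₀ hq, zpow_add₀ hq, zpow_sub₀ (div_ne_zero hX hY), zpow_natCast, pow_mul,
    mul_pow, div_pow, inv_pow, pow_succ, mul_inv]
  field_simp
  ring

lemma prod_range_one_sub_mul_zpow (hq : q ≠ 0) {X : K} (hX : X ≠ 0) (N : ℕ) :
    ∏ j ∈ Finset.range (2 * N + 1), (1 - X * q ^ ((j : ℤ) - N)) =
      (-X) ^ N / q ^ (N + 1).choose 2 * qThetaPartial q X (N + 1) N := by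
  rw [← qPoch_div_pow_add hq hX, show N + (N + 1) = 2 * N + 1 by ring, qPoch]
  refine Finset.prod_congr rfl fun j _ ↦ ?_
  rw [zpow_sub₀ hq, zpow_natCast, zpow_natCast]
  ring

lemma prod_mul_prod_one_sub_mul_zpow {X Y : K} (hq : q ≠ 0) (hX : X ≠ 0) (hY : Y ≠ 0) (N : ℕ) :
    (∏ j ∈ Finset.range (2 * N + 1), (1 - X * q ^ ((j : ℤ) - N))) *
        ∏ j ∈ Finset.range (2 * N + 1), (1 - Y * q ^ ((j : ℤ) - N)) =
      (X * Y) ^ N / q ^ (2 * (N + 1).choose 2) *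
        (qThetaPartial q X (N + 1) N * qThetaPartial q Y (N + 1) N) := by
  have hsign : (-1 : K) ^ N * (-1) ^ N = 1 := by rw [← mul_pow]; simp
  rw [prod_range_one_sub_mul_zpow hq hX, prod_range_one_sub_mul_zpow hq hY, neg_pow X, neg_pow Y,
    mul_mul_mul_comm, div_mul_div_comm, mul_mul_mul_comm, hsign, one_mul, two_mul, pow_add, mul_pow]

lemma partialFraction_summand {X Y : K} (hq : q ≠ 0) (hX : X ≠ 0) (hY : Y ≠ 0) {N a b : ℕ}
    (hab : a + b = 2 * N) :
    (X * q ^ ((a : ℤ) - N))⁻¹ ^ (2 * N + 1) / ((1 - X * q ^ ((a : ℤ) - N)) *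
        ((∏ j ∈ (Finset.range (2 * N + 1)).erase a,
            (1 - X * q ^ ((j : ℤ) - N) / (X * q ^ ((a : ℤ) - N)))) *
          ∏ j ∈ Finset.range (2 * N + 1),
            (1 - Y * q ^ ((j : ℤ) - N) / (X * q ^ ((a : ℤ) - N))))) =
      q ^ (2 * (N + 1).choose 2) / (X * Y) ^ N * (X⁻¹ * qAppellTerm q X Y (a - N) *
        (qPoch q q a * qPoch q q b * qThetaPartial q (Y / X) (b + 1) a)⁻¹) := by
  have hratio (Z : K) (j : ℕ) : Z * q ^ ((j : ℤ) - N) / (X * q ^ ((a : ℤ) - N)) =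
      Z / X / q ^ a * q ^ j := by
    simp only [zpow_sub₀ hq, zpow_natCast]
    field_simp
  have hsame : ∏ j ∈ (Finset.range (2 * N + 1)).erase a, (1 - X / X / q ^ a * q ^ j) =
      (-1) ^ a / q ^ (a + 1).choose 2 * (qPoch q q a * qPoch q q b) := by
    rw [← hab, ← prod_range_erase_one_sub_div hq, div_self hX]
    simp only [one_div_mul_eq_div]
  have hother : ∏ j ∈ Finset.range (2 * N + 1), (1 - Y / X / q ^ a * q ^ j) =
      (-(Y / X)) ^ a / q ^ (a + 1).choose 2 * qThetaPartial q (Y / X) (b + 1) a := by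
    rw [← qPoch_div_pow_add hq (div_ne_zero hY hX), ← add_assoc, hab, qPoch]
  simp only [hratio]
  rw [hsame, hother, qAppellTerm, div_eq_mul_inv, mul_inv (1 - _)]
  linear_combination (1 - X * q ^ ((a : ℤ) - N))⁻¹ *
    (qPoch q q a * qPoch q q b * qThetaPartial q (Y / X) (b + 1) a)⁻¹ *
    inv_pow_node_eq hq hX hY N a

theorem qThetaPartial_mul_inv_eq_sum {X Y : K} (hq : q ≠ 0)
    (hinj : Function.Injective fun i : ℤ ↦ q ^ i) (hX : X ≠ 0) (hY : Y ≠ 0)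
    (hX1 : ∀ n : ℤ, X * q ^ n ≠ 1) (hY1 : ∀ n : ℤ, Y * q ^ n ≠ 1) (hXY : ∀ n : ℤ, Y / X * q ^ n ≠ 1)
    (N : ℕ) :
    (qThetaPartial q X (N + 1) N * qThetaPartial q Y (N + 1) N)⁻¹ =
      ∑ ab ∈ antidiagonal (2 * N),
        (X⁻¹ * qAppellTerm q X Y (ab.1 - N) *
            (qPoch q q ab.1 * qPoch q q ab.2 * qThetaPartial q (Y / X) (ab.2 + 1) ab.1)⁻¹ +
          Y⁻¹ * qAppellTerm q Y X (ab.1 - N) *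
            (qPoch q q ab.1 * qPoch q q ab.2 * qThetaPartial q (X / Y) (ab.2 + 1) ab.1)⁻¹) := by
  have hnode {Z : K} (hZ : Z ≠ 0) : Function.Injective fun j : ℕ ↦ Z * q ^ ((j : ℤ) - N) := by
    intro i j h
    have := hinj (mul_left_cancel₀ hZ h)
    omega
  have hcross (i j : ℕ) : X * q ^ ((i : ℤ) - N) ≠ Y * q ^ ((j : ℤ) - N) := by
    intro h
    apply hXY (j - i)
    simp only [zpow_sub₀ hq, zpow_natCast] at h ⊢
    field_simp at h ⊢
    exact h.symm
  have hpf := prod_mul_prod_one_sub_inv_eq_sum (s := Finset.range (2 * N + 1)) (k := 2 * N + 1)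
    (hnode hX).injOn (hnode hY).injOn (fun i _ j _ ↦ hcross i j)
    (fun i _ ↦ mul_ne_zero hX (zpow_ne_zero _ hq)) (fun i _ ↦ mul_ne_zero hY (zpow_ne_zero _ hq))
    (fun i _ ↦ hX1 _) (fun i _ ↦ hY1 _) (by rw [Finset.card_range]; omega)
  have hc : q ^ (2 * (N + 1).choose 2) / (X * Y) ^ N ≠ 0 :=
    div_ne_zero (pow_ne_zero _ hq) (pow_ne_zero _ (mul_ne_zero hX hY))
  rw [prod_mul_prod_one_sub_mul_zpow hq hX hY, mul_inv (_ / _), inv_div,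
    ← Finset.Nat.sum_antidiagonal_eq_sum_range_succ (fun a _ ↦ _ + _)] at hpf
  refine mul_left_cancel₀ hc (hpf.trans ?_)
  rw [Finset.mul_sum]
  refine Finset.sum_congr rfl fun ab hab ↦ ?_
  rw [mul_add, partialFraction_summand hq hX hY (mem_antidiagonal.1 hab),
    partialFraction_summand hq hY hX (mem_antidiagonal.1 hab), mul_comm Y X]

end QPochhammer

section InfiniteProducts

open Filter Topology
open Finset.HasAntidiagonal (antidiagonal mem_antidiagonal)

variable {𝕜 : Type*} [NormedField 𝕜]

/-- The infinite `q`-Pochhammer symbol `(a; q)_∞`, meaningful for `‖q‖ < 1`. -/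
def qPochInf (q a : 𝕜) : 𝕜 := ∏' i : ℕ, (1 - a * q ^ i)

/-- The multiplicative theta function `(X; q)_∞ (q / X; q)_∞`, which vanishes at `X ∈ q ^ ℤ`. -/
def qTheta (q X : 𝕜) : 𝕜 := qPochInf q X * qPochInf q (q / X)

variable {q a X Y : 𝕜}

lemma injective_zpow_of_norm_lt_one (hq : q ≠ 0) (hq1 : ‖q‖ < 1) :
    Function.Injective fun i : ℤ ↦ q ^ i := by
  intro i j h
  refine zpow_right_injective₀ (norm_pos_iff.2 hq) hq1.ne ?_
  simpa only [norm_zpow] using congrArg norm h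

lemma self_mul_pow_ne_one (hq1 : ‖q‖ < 1) (i : ℕ) : q * q ^ i ≠ 1 := by
  intro h
  have hnorm := congrArg norm h
  rw [← pow_succ', norm_pow, norm_one] at hnorm
  exact (pow_lt_one₀ (norm_nonneg q) hq1 i.succ_ne_zero).ne hnorm

lemma mul_pow_ne_one (h : ∀ n : ℤ, X * q ^ n ≠ 1) (i : ℕ) : X * q ^ i ≠ 1 := by
  simpa only [zpow_natCast] using h i

lemma inv_mul_zpow_ne_one (h : ∀ n : ℤ, X * q ^ n ≠ 1) (n : ℤ) : X⁻¹ * q ^ n ≠ 1 := by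
  intro hn
  apply h (-n)
  rw [zpow_neg, ← inv_inv X, ← mul_inv, hn, inv_one]

lemma div_mul_pow_ne_one (hq : q ≠ 0) (h : ∀ n : ℤ, X * q ^ n ≠ 1) (i : ℕ) :
    q / X * q ^ i ≠ 1 := by
  have := inv_mul_zpow_ne_one h (i + 1)
  rwa [zpow_add_one₀ hq, zpow_natCast, mul_comm _ q, ← mul_assoc, mul_comm _ q,
    ← div_eq_mul_inv] at this

section Products

lemma summable_norm_neg_mul_pow (hq1 : ‖q‖ < 1) (a : 𝕜) :
    Summable fun i : ℕ ↦ ‖-(a * q ^ i)‖ := by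
  simpa only [norm_neg, norm_mul, norm_pow] using
    (summable_geometric_of_lt_one (norm_nonneg q) hq1).mul_left ‖a‖

lemma qPochInf_eq_zero {i : ℕ} (h : a * q ^ i = 1) : qPochInf q a = 0 :=
  tprod_of_exists_eq_zero ⟨i, sub_eq_zero.2 h.symm⟩

lemma qTheta_zpow (hq : q ≠ 0) (n : ℤ) : qTheta q (q ^ n) = 0 := by
  obtain ⟨k, rfl | rfl⟩ := n.eq_nat_or_neg
  · cases k with
    | zero => exact mul_eq_zero_of_left (qPochInf_eq_zero (i := 0) (by simp)) _
    | succ k =>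
      refine mul_eq_zero_of_right _ (qPochInf_eq_zero (i := k) ?_)
      rw [zpow_natCast, pow_succ']
      field_simp
  · refine mul_eq_zero_of_left (qPochInf_eq_zero (i := k) ?_) _
    rw [zpow_neg, zpow_natCast, inv_mul_cancel₀ (pow_ne_zero k hq)]

variable [CompleteSpace 𝕜]

lemma tendsto_qPoch (hq1 : ‖q‖ < 1) (a : 𝕜) :
    Tendsto (qPoch q a) atTop (𝓝 (qPochInf q a)) := by
  have := multipliable_one_add_of_summable (summable_norm_neg_mul_pow hq1 a)
  simp only [← sub_eq_add_neg] at this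
  exact this.tendsto_prod_tprod_nat

lemma qPochInf_ne_zero (hq1 : ‖q‖ < 1) (h : ∀ i : ℕ, a * q ^ i ≠ 1) : qPochInf q a ≠ 0 := by
  have := tprod_one_add_ne_zero_of_summable (f := fun i : ℕ ↦ -(a * q ^ i))
    (fun i ↦ by simpa only [← sub_eq_add_neg] using sub_ne_zero.2 (h i).symm)
    (summable_norm_neg_mul_pow hq1 a)
  simpa only [qPochInf, sub_eq_add_neg] using this

lemma qPochInf_eq_mul (hq1 : ‖q‖ < 1) (a : 𝕜) :
    qPochInf q a = (1 - a) * qPochInf q (a * q) := by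
  refine tendsto_nhds_unique ((tendsto_qPoch hq1 a).comp (tendsto_add_atTop_nat 1)) ?_
  simpa only [Function.comp_def, qPoch_succ'] using (tendsto_qPoch hq1 (a * q)).const_mul (1 - a)

lemma qTheta_inv (hq1 : ‖q‖ < 1) (hX : X ≠ 0) : qTheta q X⁻¹ = -X⁻¹ * qTheta q X := by
  rw [qTheta, qTheta, qPochInf_eq_mul hq1 X⁻¹, qPochInf_eq_mul hq1 X, div_inv_eq_mul, mul_comm q X,
    inv_mul_eq_div]
  field_simp
  ring

lemma qTheta_ne_zero (hq : q ≠ 0) (hq1 : ‖q‖ < 1) (h : ∀ n : ℤ, X * q ^ n ≠ 1) :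
    qTheta q X ≠ 0 :=
  mul_ne_zero (qPochInf_ne_zero hq1 (mul_pow_ne_one h))
    (qPochInf_ne_zero hq1 (div_mul_pow_ne_one hq h))

lemma tendsto_qThetaPartial (hq1 : ‖q‖ < 1) (X : 𝕜) (k : ℕ) :
    Tendsto (fun N ↦ qThetaPartial q X (N + k) N) atTop (𝓝 (qTheta q X)) :=
  ((tendsto_qPoch hq1 X).comp (tendsto_add_atTop_nat k)).mul (tendsto_qPoch hq1 (q / X))

end Products

section Sums

lemma summable_norm_zpow_mul_zpow_sq (hq : q ≠ 0) (hq1 : ‖q‖ < 1) (hX : X ≠ 0) :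
    Summable fun n : ℤ ↦ ‖X ^ n * q ^ (n ^ 2)‖ := by
  set z : ℂ := ↑(-(Real.log ‖X‖ / (2 * Real.pi))) * I with hz
  set τ : ℂ := ↑(-(Real.log ‖q‖ / Real.pi)) * I with hτ
  have hzim : z.im = -(Real.log ‖X‖ / (2 * Real.pi)) := by
    rw [hz, Complex.im_ofReal_mul, I_im, mul_one]
  have hτim : τ.im = -(Real.log ‖q‖ / Real.pi) := by rw [hτ, Complex.im_ofReal_mul, I_im, mul_one]
  have hτpos : 0 < τ.im := by
    rw [hτim, ← neg_div]
    exact div_pos (neg_pos.2 (Real.log_neg (norm_pos_iff.2 hq) hq1)) Real.pi_pos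
  refine ((summable_jacobiTheta₂_term_iff z τ).2 hτpos).norm.congr fun n ↦ ?_
  rw [norm_jacobiTheta₂_term, hzim, hτim, norm_mul, norm_zpow, norm_zpow,
    ← Real.exp_log (zpow_pos (norm_pos_iff.2 hX) n),
    ← Real.exp_log (zpow_pos (norm_pos_iff.2 hq) (n ^ 2)), ← Real.exp_add,
    Real.log_zpow, Real.log_zpow]
  congr 1
  field_simp
  push_cast
  ring

lemma exists_norm_one_sub_mul_zpow_inv_le (hq : q ≠ 0) (hq1 : ‖q‖ < 1) (hX : X ≠ 0) :
    ∃ C : ℝ, ∀ n : ℤ, ‖(1 - X * q ^ n)⁻¹‖ ≤ C := by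
  have hpow := tendsto_pow_atTop_nhds_zero_of_norm_lt_one hq1
  have hpos : Tendsto (fun n : ℕ ↦ (1 - X * q ^ n)⁻¹) atTop (𝓝 1) := by
    simpa using ((hpow.const_mul X).const_sub 1).inv₀ (by simp)
  have hneg : Tendsto (fun n : ℕ ↦ (1 - X / q ^ n)⁻¹) atTop (𝓝 0) := by
    have hlim := hpow.mul ((hpow.sub_const X).inv₀ (by simpa using hX))
    rw [zero_mul] at hlim
    refine hlim.congr fun n ↦ ?_
    rw [one_sub_div (pow_ne_zero n hq), inv_div, div_eq_mul_inv]
  obtain ⟨C₁, hC₁⟩ := (Metric.isBounded_range_of_tendsto _ hpos).exists_norm_le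
  obtain ⟨C₂, hC₂⟩ := (Metric.isBounded_range_of_tendsto _ hneg).exists_norm_le
  refine ⟨max C₁ C₂, fun n ↦ ?_⟩
  obtain ⟨k, rfl | rfl⟩ := n.eq_nat_or_neg
  · rw [zpow_natCast]
    exact (hC₁ _ ⟨k, rfl⟩).trans (le_max_left _ _)
  · rw [zpow_neg, zpow_natCast, ← div_eq_mul_inv]
    exact (hC₂ _ ⟨k, rfl⟩).trans (le_max_right _ _)

lemma summable_norm_qAppellTerm (hq : q ≠ 0) (hq1 : ‖q‖ < 1) (hX : X ≠ 0) (hY : Y ≠ 0) :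
    Summable fun n : ℤ ↦ ‖qAppellTerm q X Y n‖ := by
  obtain ⟨C, hC⟩ := exists_norm_one_sub_mul_zpow_inv_le hq hq1 hX
  refine ((summable_norm_zpow_mul_zpow_sq hq hq1 (div_ne_zero hX hY)).mul_right C).of_nonneg_of_le
    (fun _ ↦ norm_nonneg _) fun n ↦ ?_
  rw [qAppellTerm, div_eq_mul_inv, norm_mul]
  exact mul_le_mul_of_nonneg_left (hC n) (norm_nonneg _)

lemma sum_antidiagonal_eq_sum_Icc {M : Type*} [AddCommMonoid M] (g : ℤ → ℕ → ℕ → M) (N : ℕ) :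
    ∑ ab ∈ antidiagonal (2 * N), g (ab.1 - N) ab.1 ab.2 =
      ∑ n ∈ Finset.Icc (-N : ℤ) N, g n (N + n).toNat (N - n).toNat := by
  refine Finset.sum_nbij' (fun ab ↦ (ab.1 : ℤ) - N) (fun n ↦ ((N + n).toNat, (N - n).toNat))
    ?_ ?_ ?_ ?_ ?_ <;> simp only [mem_antidiagonal, Finset.mem_Icc, Prod.forall, Prod.mk.injEq]
  · omega
  · omega
  · omega
  · omega
  · intro a b hab
    congr 1 <;> omega

lemma tendsto_sum_antidiagonal_mul [CompleteSpace 𝕜] {f : ℤ → 𝕜} (hf : Summable fun n ↦ ‖f n‖)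
    {u v : ℕ → 𝕜} {l l' : 𝕜} (hu : Tendsto u atTop (𝓝 l)) (hv : Tendsto v atTop (𝓝 l')) :
    Tendsto (fun N : ℕ ↦ ∑ ab ∈ antidiagonal (2 * N), f (ab.1 - N) * (u ab.1 * v ab.2)) atTop
      (𝓝 ((∑' n, f n) * (l * l'))) := by
  obtain ⟨C, hC⟩ := (Metric.isBounded_range_of_tendsto _ hu).exists_norm_le
  obtain ⟨C', hC'⟩ := (Metric.isBounded_range_of_tendsto _ hv).exists_norm_le
  have hC0 : 0 ≤ C := (norm_nonneg _).trans (hC _ ⟨0, rfl⟩)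
  let g (N : ℕ) (n : ℤ) : 𝕜 := f n * (u (N + n).toNat * v (N - n).toNat)
  have hsum (N : ℕ) : ∑ ab ∈ antidiagonal (2 * N), f (ab.1 - N) * (u ab.1 * v ab.2) =
      ∑' n, (Finset.Icc (-N : ℤ) N : Set ℤ).indicator (g N) n :=
    (sum_antidiagonal_eq_sum_Icc (fun n a b ↦ f n * (u a * v b)) N).trans
      (sum_eq_tsum_indicator (g N) _)
  simp only [hsum, ← tsum_mul_right]
  refine tendsto_tsum_of_dominated_convergence (bound := fun n ↦ ‖f n‖ * (C * C'))
    (hf.mul_right (C * C')) (fun n ↦ ?_) (.of_forall fun N n ↦ ?_)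
  · have hleft : Tendsto (fun N : ℕ ↦ (N + n).toNat) atTop atTop :=
      tendsto_atTop.2 fun b ↦ (eventually_ge_atTop (b + n.natAbs)).mono fun N hN ↦ by omega
    have hright : Tendsto (fun N : ℕ ↦ (N - n).toNat) atTop atTop :=
      tendsto_atTop.2 fun b ↦ (eventually_ge_atTop (b + n.natAbs)).mono fun N hN ↦ by omega
    refine (((hu.comp hleft).mul (hv.comp hright)).const_mul (f n)).congr' ?_
    filter_upwards [eventually_ge_atTop n.natAbs] with N hN
    rw [Set.indicator_of_mem (by simp only [Finset.coe_Icc, Set.mem_Icc]; omega)]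
    rfl
  · refine (norm_indicator_le_norm_self _ _).trans ?_
    rw [norm_mul, norm_mul]
    gcongr
    exacts [hC _ ⟨_, rfl⟩, hC' _ ⟨_, rfl⟩]

end Sums

section ProductFormulas

variable [CompleteSpace 𝕜]

theorem tsum_zpow_sq_mul_zpow {p z : 𝕜} (hp : p ≠ 0) (hp1 : ‖p‖ < 1) (hz : z ≠ 0) :
    ∑' n : ℤ, p ^ (n ^ 2) * z ^ n = qPochInf (p ^ 2) (p ^ 2) * qTheta (p ^ 2) (-p * z) := by
  have hq1 : ‖p ^ 2‖ < 1 := by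
    rw [norm_pow]
    exact pow_lt_one₀ (norm_nonneg p) hp1 two_ne_zero
  have hfactor := self_mul_pow_ne_one hq1
  have hqInf : qPochInf (p ^ 2) (p ^ 2) ≠ 0 := qPochInf_ne_zero hq1 hfactor
  have hinv := (tendsto_qPoch hq1 (p ^ 2)).inv₀ hqInf
  have hsummable : Summable fun n : ℤ ↦ ‖p ^ (n ^ 2) * z ^ n‖ := by
    simpa only [mul_comm] using summable_norm_zpow_mul_zpow_sq hp hp1 hz
  have hlim := ((tendsto_qPoch hq1 (p ^ 2)).comp (tendsto_id.const_mul_atTop' two_pos)).mul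
    (tendsto_sum_antidiagonal_mul hsummable hinv hinv)
  have hprod := tendsto_qThetaPartial hq1 (-p * z) 0
  simp only [add_zero, qThetaPartial_eq_sum_antidiagonal hp hz
    (fun n ↦ qPoch_ne_zero hfactor n), mul_inv] at hprod
  rw [tendsto_nhds_unique hprod hlim]
  field_simp

lemma tendsto_sum_qAppellTerm (hq : q ≠ 0) (hq1 : ‖q‖ < 1) (hX : X ≠ 0) (hY : Y ≠ 0)
    (hXY : ∀ n : ℤ, Y / X * q ^ n ≠ 1) :
    Tendsto (fun N : ℕ ↦ ∑ ab ∈ antidiagonal (2 * N), X⁻¹ * qAppellTerm q X Y (ab.1 - N) *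
        (qPoch q q ab.1 * qPoch q q ab.2 * qThetaPartial q (Y / X) (ab.2 + 1) ab.1)⁻¹) atTop
      (𝓝 (X⁻¹ * (∑' n, qAppellTerm q X Y n) * (qPochInf q q ^ 2 * qTheta q (Y / X))⁻¹)) := by
  have hqInf : qPochInf q q ≠ 0 := qPochInf_ne_zero hq1 (self_mul_pow_ne_one hq1)
  have hleft := ((tendsto_qPoch hq1 q).mul (tendsto_qPoch hq1 (q / (Y / X)))).inv₀
    (mul_ne_zero hqInf (qPochInf_ne_zero hq1 (div_mul_pow_ne_one hq hXY)))
  have hright := ((tendsto_qPoch hq1 q).mul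
    ((tendsto_qPoch hq1 (Y / X)).comp (tendsto_add_atTop_nat 1))).inv₀
    (mul_ne_zero hqInf (qPochInf_ne_zero hq1 (mul_pow_ne_one hXY)))
  convert (tendsto_sum_antidiagonal_mul (summable_norm_qAppellTerm hq hq1 hX hY)
    hleft hright).const_mul X⁻¹ using 2
  · rw [Finset.mul_sum]
    refine Finset.sum_congr rfl fun ab _ ↦ ?_
    simp only [qThetaPartial, Function.comp_apply, mul_inv]
    ring
  · simp only [qTheta, mul_inv]
    ring

lemma tsum_qAppellTerm_sub_of_ne (hq : q ≠ 0) (hq1 : ‖q‖ < 1) (hX : X ≠ 0) (hY : Y ≠ 0)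
    (hX1 : ∀ n : ℤ, X * q ^ n ≠ 1) (hY1 : ∀ n : ℤ, Y * q ^ n ≠ 1)
    (hXY : ∀ n : ℤ, Y / X * q ^ n ≠ 1) :
    ∑' n, qAppellTerm q X Y n - ∑' n, qAppellTerm q Y X n =
      -Y * qPochInf q q ^ 2 * qTheta q (X / Y) / (qTheta q X * qTheta q Y) := by
  have hYX (n : ℤ) : X / Y * q ^ n ≠ 1 := by
    simpa only [inv_div] using inv_mul_zpow_ne_one hXY n
  have hqInf : qPochInf q q ≠ 0 := qPochInf_ne_zero hq1 (self_mul_pow_ne_one hq1)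
  have hθX := qTheta_ne_zero hq hq1 hX1
  have hθY := qTheta_ne_zero hq hq1 hY1
  have hθ := qTheta_ne_zero hq hq1 hYX
  have hsum := (tendsto_sum_qAppellTerm hq hq1 hX hY hXY).add
    (tendsto_sum_qAppellTerm hq hq1 hY hX hYX)
  simp only [← Finset.sum_add_distrib, ← qThetaPartial_mul_inv_eq_sum hq
    (injective_zpow_of_norm_lt_one hq hq1) hX hY hX1 hY1 hXY] at hsum
  have hlim := ((tendsto_qThetaPartial hq1 X 1).mul (tendsto_qThetaPartial hq1 Y 1)).inv₀
    (mul_ne_zero hθX hθY)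
  have heq := tendsto_nhds_unique hsum hlim
  rw [← inv_div X Y, qTheta_inv hq1 (div_ne_zero hX hY)] at heq
  field_simp at heq ⊢
  linear_combination -heq

theorem tsum_qAppellTerm_sub (hq : q ≠ 0) (hq1 : ‖q‖ < 1) (hX : X ≠ 0) (hY : Y ≠ 0)
    (hX1 : ∀ n : ℤ, X * q ^ n ≠ 1) (hY1 : ∀ n : ℤ, Y * q ^ n ≠ 1) :
    ∑' n, qAppellTerm q X Y n - ∑' n, qAppellTerm q Y X n =
      -Y * qPochInf q q ^ 2 * qTheta q (X / Y) / (qTheta q X * qTheta q Y) := by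
  by_cases! hXY : ∀ n : ℤ, Y / X * q ^ n ≠ 1
  · exact tsum_qAppellTerm_sub_of_ne hq hq1 hX hY hX1 hY1 hXY
  obtain ⟨n, hn⟩ := hXY
  have hratio : X / Y = q ^ n := by rw [← inv_div, eq_comm, eq_inv_of_mul_eq_one_right hn]
  have hYX : Y = X * q ^ (-n) := by
    rw [zpow_neg, ← hratio]
    field_simp
  rw [hratio, qTheta_zpow hq, mul_zero, zero_div, sub_eq_zero,
    ← (Equiv.subRight n).tsum_eq]
  refine tsum_congr fun i ↦ ?_
  rw [qAppellTerm, qAppellTerm, ← inv_div X Y, hratio, hYX, mul_assoc X, Equiv.subRight_apply,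
    ← zpow_neg, ← zpow_mul, ← zpow_mul, ← zpow_add₀ hq, ← zpow_add₀ hq, ← zpow_add₀ hq]
  ring_nf

end ProductFormulas

end InfiniteProducts

section Exponential

lemma e2_add (a b : ℂ) : e2 (a + b) = e2 a * e2 b := by
  simp only [e2, mul_add, exp_add]

lemma e2_neg (a : ℂ) : e2 (-a) = (e2 a)⁻¹ := by
  simp only [e2, mul_neg, exp_neg]

lemma e2_sub (a b : ℂ) : e2 (a - b) = e2 a / e2 b := by
  simp only [e2, mul_sub, exp_sub]

lemma e2_ne_zero (a : ℂ) : e2 a ≠ 0 := exp_ne_zero _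

lemma e2_zpow (a : ℂ) (n : ℤ) : e2 a ^ n = e2 (n * a) := by
  rw [e2, e2, ← exp_int_mul]
  ring_nf

lemma e2_pow (a : ℂ) (n : ℕ) : e2 a ^ n = e2 (n * a) := by
  exact_mod_cast e2_zpow a n

lemma e2_intCast (n : ℤ) : e2 n = 1 := by
  rw [e2, mul_comm]
  exact exp_int_mul_two_pi_mul_I n

lemma e2_one_half : e2 (1 / 2) = -1 := by
  rw [e2, ← exp_pi_mul_I]
  ring_nf

lemma e2_one_fourth : e2 (1 / 4) = I := by
  rw [e2, show 2 * (Real.pi : ℂ) * I * (1 / 4) = Real.pi / 2 * I by ring, exp_pi_div_two_mul_I]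

lemma qpow_eq_e2 (τ x : ℂ) : qpow τ x = e2 (τ * x) := by
  rw [qpow, e2, mul_assoc _ τ]

lemma jacobiTheta₂_term_eq_e2 (n : ℤ) (z τ : ℂ) :
    jacobiTheta₂_term n z τ = e2 (n * z + n ^ 2 * τ / 2) := by
  rw [jacobiTheta₂_term, e2]
  ring_nf

variable {τ z : ℂ}

lemma norm_e2_lt_one (hτ : 0 < τ.im) : ‖e2 τ‖ < 1 :=
  UpperHalfPlane.norm_exp_two_pi_I_lt_one ⟨τ, hτ⟩

lemma e2_mul_zpow_ne_one (hz : ¬InLattice τ z) (n : ℤ) : e2 z * e2 τ ^ n ≠ 1 := by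
  rw [e2_zpow, ← e2_add, e2, mul_comm]
  intro h
  obtain ⟨k, hk⟩ := exp_eq_one_iff.1 h
  refine hz ⟨k, -n, ?_⟩
  push_cast
  linear_combination mul_right_cancel₀ two_pi_I_ne_zero hk

lemma im_natCast_mul_pos {k : ℕ} (hk : 0 < k) (hτ : 0 < τ.im) : 0 < ((k : ℂ) * τ).im := by
  rw [← ofReal_natCast, im_ofReal_mul]
  positivity

lemma InLattice.neg (h : InLattice τ z) : InLattice τ (-z) := by
  obtain ⟨a, b, rfl⟩ := h
  exact ⟨-a, -b, by push_cast; ring⟩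

lemma inLattice_neg_iff : InLattice τ (-z) ↔ InLattice τ z :=
  ⟨fun h ↦ neg_neg z ▸ h.neg, InLattice.neg⟩

lemma InLattice.add_int_mul (h : InLattice τ z) (n : ℤ) : InLattice τ (z + n * τ) := by
  obtain ⟨a, b, rfl⟩ := h
  exact ⟨a, b + n, by push_cast; ring⟩

lemma inLattice_add_int_mul_iff (n : ℤ) : InLattice τ (z + n * τ) ↔ InLattice τ z :=
  ⟨fun h ↦ by simpa using h.add_int_mul (-n), fun h ↦ h.add_int_mul n⟩

end Exponential

section ThetaFunctions

variable {τ : ℂ}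

lemma jacobiTheta₂_term_neg (n : ℤ) (z τ : ℂ) :
    jacobiTheta₂_term (-n) z τ = jacobiTheta₂_term n (-z) τ := by
  rw [jacobiTheta₂_term, jacobiTheta₂_term]
  push_cast
  ring_nf

lemma jacobiTheta₂_eq_qTheta (hτ : 0 < τ.im) (z : ℂ) :
    jacobiTheta₂ z τ = qPochInf (e2 τ) (e2 τ) * qTheta (e2 τ) (-e2 (z + τ / 2)) := by
  have hq : e2 τ = e2 (τ / 2) ^ 2 := by
    rw [e2_pow]
    congr 1
    push_cast
    ring
  have htriple := tsum_zpow_sq_mul_zpow (e2_ne_zero (τ / 2))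
    (norm_e2_lt_one (by simpa using hτ)) (e2_ne_zero z)
  rw [← hq, neg_mul, mul_comm (e2 (τ / 2)), ← e2_add] at htriple
  rw [← htriple, jacobiTheta₂]
  refine tsum_congr fun n ↦ ?_
  rw [jacobiTheta₂_term_eq_e2, e2_zpow, e2_zpow, ← e2_add]
  congr 1
  push_cast
  ring

lemma mumford_one_one_eq_jacobiTheta₂ (τ z : ℂ) :
    mumford 1 1 τ z = e2 (τ / 8 + 1 / 4 + z / 2) * jacobiTheta₂ (z + 1 / 2 + τ / 2) τ := by
  rw [mumford, jacobiTheta₂, ← tsum_mul_left]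
  refine tsum_congr fun n ↦ ?_
  rw [jacobiTheta₂_term, e2, ← exp_add]
  congr 1
  push_cast
  ring

lemma mumford_one_one_eq_qTheta (hτ : 0 < τ.im) (z : ℂ) : mumford 1 1 τ z =
    -e2 (τ / 8 + 1 / 4 - z / 2) * qPochInf (e2 τ) (e2 τ) * qTheta (e2 τ) (e2 z) := by
  have harg : -e2 (-(z + 1 / 2 + τ / 2) + τ / 2) = (e2 z)⁻¹ := by
    rw [show -(z + 1 / 2 + τ / 2) + τ / 2 = -z - 1 / 2 by ring, e2_sub, e2_one_half, e2_neg]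
    ring
  have hfactor : e2 (τ / 8 + 1 / 4 + z / 2) = e2 (τ / 8 + 1 / 4 - z / 2) * e2 z := by
    rw [← e2_add]
    ring_nf
  have hz := e2_ne_zero z
  rw [mumford_one_one_eq_jacobiTheta₂, ← jacobiTheta₂_neg_left, jacobiTheta₂_eq_qTheta hτ, harg,
    qTheta_inv (norm_e2_lt_one hτ) hz, hfactor]
  field_simp

lemma mumford_one_one_neg (hτ : 0 < τ.im) (z : ℂ) : mumford 1 1 τ (-z) = -mumford 1 1 τ z := by
  have hfactor : e2 (τ / 8 + 1 / 4 - -z / 2) = e2 (τ / 8 + 1 / 4 - z / 2) * e2 z := by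
    rw [← e2_add]
    ring_nf
  have hz := e2_ne_zero z
  rw [mumford_one_one_eq_qTheta hτ, mumford_one_one_eq_qTheta hτ, e2_neg,
    qTheta_inv (norm_e2_lt_one hτ) hz, hfactor]
  field_simp

lemma mumford_one_one_add_int_mul (τ z : ℂ) (s : ℤ) : mumford 1 1 τ (z + s * τ) =
    e2 (-(s ^ 2 * τ / 2 + s * (z + 1 / 2))) * mumford 1 1 τ z := by
  rw [mumford, mumford, ← tsum_mul_left, ← (Equiv.subRight s).tsum_eq]
  refine tsum_congr fun n ↦ ?_
  rw [e2, ← exp_add, Equiv.subRight_apply]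
  congr 1
  push_cast
  ring

lemma eta_eq_qPochInf (τ : ℂ) : eta τ = e2 (τ / 24) * qPochInf (e2 τ) (e2 τ) := by
  simp only [eta, qPochInf, qpow_eq_e2, e2_pow, ← e2_add]
  ring_nf

lemma jTheta_eq_jacobiTheta₂ (k : ℂ) {μ : ℂ} (hμ : μ ≠ 0) (τ z : ℂ) : jTheta k μ τ z =
    e2 (k * z / 2 + k ^ 2 / (4 * μ) * τ) * jacobiTheta₂ (μ * z + k * τ) (2 * μ * τ) := by
  rw [jTheta, jacobiTheta₂, ← tsum_mul_left]
  refine tsum_congr fun n ↦ ?_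
  rw [← e2, qpow_eq_e2, jacobiTheta₂_term_eq_e2, ← e2_add, ← e2_add]
  congr 1
  field_simp
  ring

lemma jTheta_zero_div {μ : ℂ} (hμ : μ ≠ 0) (τ z : ℂ) :
    jTheta 0 μ τ (z / μ) = jacobiTheta₂ z (2 * μ * τ) := by
  simp [jTheta_eq_jacobiTheta₂ 0 hμ, mul_div_cancel₀ z hμ, e2]

end ThetaFunctions

section AppellSums

/-- The summand of the Appell–Lerch sum `appellSum`. -/
def appellTerm (σ τ c p : ℂ) (n : ℤ) : ℂ := jacobiTheta₂_term n c σ / (1 - e2 (p + n * τ))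

/-- The Appell–Lerch sum `∑ n, e ^ (2πinc + πin²σ) / (1 - e ^ (2πi(p + nτ)))`. -/
def appellSum (σ τ c p : ℂ) : ℂ := ∑' n, appellTerm σ τ c p n

/-- The combination of two Appell–Lerch sums which occurs in the mock theta function
`Φ^{[m,0]}`, see `Phi_eq_appellDiff`. -/
def appellDiff (σ τ c p r : ℂ) : ℂ := appellSum σ τ c p - appellSum σ τ (-c) r

/-- The theta quotient `i η(τ)³ ϑ₁₁(p - r) / (ϑ₁₁(p) ϑ₁₁(r))`. -/
def mumfordQuotient (τ p r : ℂ) : ℂ :=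
  I * (eta τ ^ 3 * mumford 1 1 τ (p - r) / (mumford 1 1 τ p * mumford 1 1 τ r))

variable {σ σ' τ : ℂ} {p r : ℂ}

lemma Phi_eq_appellDiff (μ τ p r : ℂ) :
    Phi μ 0 τ p (-r) 0 = appellDiff (2 * μ * τ) τ (μ * (p - r)) p r := by
  simp only [Phi, Phi1, Phi2, appellDiff, appellSum, appellTerm, mul_zero, exp_zero, one_mul,
    zero_mul, add_zero, neg_neg, jacobiTheta₂_term_eq_e2, e2, qpow, ← exp_add]
  congr 1 <;> exact tsum_congr fun n ↦ by ring_nf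

lemma exists_norm_one_sub_e2_inv_le (hτ : 0 < τ.im) (p : ℂ) :
    ∃ C : ℝ, ∀ n : ℤ, ‖(1 - e2 (p + n * τ))⁻¹‖ ≤ C := by
  simpa only [e2_add, ← e2_zpow] using
    exists_norm_one_sub_mul_zpow_inv_le (e2_ne_zero τ) (norm_e2_lt_one hτ) (e2_ne_zero p)

lemma summable_appellTerm (hσ : 0 < σ.im) (hτ : 0 < τ.im) (c p : ℂ) :
    Summable (appellTerm σ τ c p) := by
  obtain ⟨C, hC⟩ := exists_norm_one_sub_e2_inv_le hτ p
  refine .of_norm_bounded (((summable_jacobiTheta₂_term_iff c σ).2 hσ).norm.mul_right C) fun n ↦ ?_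
  rw [appellTerm, div_eq_mul_inv, norm_mul]
  exact mul_le_mul_of_nonneg_left (hC n) (norm_nonneg _)

lemma one_sub_e2_ne_zero (hp : ¬InLattice τ p) (n : ℤ) : 1 - e2 (p + n * τ) ≠ 0 := by
  rw [e2_add, ← e2_zpow]
  exact sub_ne_zero.2 (e2_mul_zpow_ne_one hp n).symm

lemma appellSum_add_appellSum_neg (hσ : 0 < σ.im) (hτ : 0 < τ.im) (hp : ¬InLattice τ p) (c : ℂ) :
    appellSum σ τ c p + appellSum σ τ (-c) (-p) = jacobiTheta₂ c σ := by
  have hneg : Summable fun n : ℤ ↦ appellTerm σ τ (-c) (-p) (-n) :=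
    (Equiv.neg ℤ).summable_iff.2 (summable_appellTerm hσ hτ (-c) (-p))
  rw [appellSum, appellSum, ← (Equiv.neg ℤ).tsum_eq (appellTerm σ τ (-c) (-p))]
  simp only [Equiv.neg_apply]
  rw [← (summable_appellTerm hσ hτ c p).tsum_add hneg]
  refine tsum_congr fun n ↦ ?_
  have hu := e2_ne_zero (p + n * τ)
  have hden := one_sub_e2_ne_zero hp n
  have hden' : e2 (p + n * τ) - 1 ≠ 0 := by rwa [← neg_sub, neg_ne_zero]
  rw [appellTerm, appellTerm, jacobiTheta₂_term_eq_e2, jacobiTheta₂_term_eq_e2,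
    show -p + ((-n : ℤ) : ℂ) * τ = -(p + n * τ) by push_cast; ring, e2_neg (p + n * τ)]
  push_cast
  rw [neg_mul_neg, neg_sq]
  field_simp
  ring

lemma appellDiff_neg_neg (hσ : 0 < σ.im) (hτ : 0 < τ.im) (hp : ¬InLattice τ p)
    (hr : ¬InLattice τ r) (c : ℂ) : appellDiff σ τ c (-r) (-p) = appellDiff σ τ c p r := by
  have hp' := appellSum_add_appellSum_neg hσ hτ hp c
  have hr' := appellSum_add_appellSum_neg hσ hτ hr (-c)
  rw [jacobiTheta₂_neg_left, neg_neg] at hr'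
  simp only [appellDiff]
  linear_combination hr' - hp'

lemma appellDiff_two_mul (hτ : 0 < τ.im) (hp : ¬InLattice τ p) (hr : ¬InLattice τ r) :
    appellDiff (2 * τ) τ (p - r) p r = mumfordQuotient τ p r := by
  have hq := e2_ne_zero τ
  have hq1 := norm_e2_lt_one hτ
  have hterm (p r : ℂ) : appellTerm (2 * τ) τ (p - r) p = qAppellTerm (e2 τ) (e2 p) (e2 r) := by
    ext n
    rw [appellTerm, qAppellTerm, jacobiTheta₂_term_eq_e2, ← e2_sub, e2_zpow, e2_zpow, e2_zpow,
      ← e2_add, ← e2_add]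
    push_cast
    ring_nf
  have hfactor : e2 (1 / 4) * (e2 (τ / 24) ^ 3 * e2 (τ / 8 + 1 / 4 - (p - r) / 2)) =
      e2 r * (e2 (τ / 8 + 1 / 4 - p / 2) * e2 (τ / 8 + 1 / 4 - r / 2)) := by
    rw [e2_pow, ← e2_add, ← e2_add, ← e2_add, ← e2_add]
    push_cast
    ring_nf
  have hθp := qTheta_ne_zero hq hq1 (e2_mul_zpow_ne_one hp)
  have hθr := qTheta_ne_zero hq hq1 (e2_mul_zpow_ne_one hr)
  have hqInf := qPochInf_ne_zero hq1 (self_mul_pow_ne_one hq1)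
  have hep := e2_ne_zero (τ / 8 + 1 / 4 - p / 2)
  have her := e2_ne_zero (τ / 8 + 1 / 4 - r / 2)
  rw [appellDiff, neg_sub, appellSum, appellSum, hterm, hterm, tsum_qAppellTerm_sub hq hq1
    (e2_ne_zero p) (e2_ne_zero r) (e2_mul_zpow_ne_one hp) (e2_mul_zpow_ne_one hr),
    mumfordQuotient, eta_eq_qPochInf, mumford_one_one_eq_qTheta hτ, mumford_one_one_eq_qTheta hτ,
    mumford_one_one_eq_qTheta hτ, e2_sub p r, ← e2_one_fourth]
  generalize e2 (τ / 8 + 1 / 4 - p / 2) = a, e2 (τ / 8 + 1 / 4 - r / 2) = b,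
    e2 (τ / 8 + 1 / 4 - (p - r) / 2) = c, e2 (τ / 24) = d, e2 (1 / 4) = i,
    qTheta (e2 τ) (e2 p / e2 r) = θ at *
  field_simp
  linear_combination θ * hfactor

lemma mumfordQuotient_add_int_mul (τ p r : ℂ) (s : ℤ) :
    mumfordQuotient τ (p + s * τ) (r + s * τ) =
      e2 (s * (p + r) + s ^ 2 * τ) * mumfordQuotient τ p r := by
  have hfactor : e2 (s * (p + r) + s ^ 2 * τ) =
      (e2 (-(s ^ 2 * τ / 2 + s * (p + 1 / 2))) * e2 (-(s ^ 2 * τ / 2 + s * (r + 1 / 2))))⁻¹ := by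
    calc e2 (s * (p + r) + s ^ 2 * τ) = e2 (s * (p + r) + s ^ 2 * τ + s) := by
          rw [e2_add _ s, e2_intCast, mul_one]
      _ = _ := by
          rw [← e2_add, ← e2_neg]
          ring_nf
  rw [mumfordQuotient, mumfordQuotient, mumford_one_one_add_int_mul, mumford_one_one_add_int_mul,
    add_sub_add_right_eq_sub, hfactor]
  simp only [div_eq_mul_inv, mul_inv]
  ring

lemma mumfordQuotient_neg_right (hτ : 0 < τ.im) (p r : ℂ) : mumfordQuotient τ p (-r) =
    -(I * (eta τ ^ 3 * mumford 1 1 τ (p + r) / (mumford 1 1 τ p * mumford 1 1 τ r))) := by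
  rw [mumfordQuotient, mumford_one_one_neg hτ, sub_neg_eq_add, mul_neg, div_neg, mul_neg]

end AppellSums

section QuasiPeriodicity

variable {τ p r : ℂ}

lemma inv_pow_div_one_sub {K : Type*} [Field K] {u : K} (hu : u ≠ 0) (hu1 : 1 - u ≠ 0) (n : ℕ) :
    u⁻¹ ^ n / (1 - u) = 1 / (1 - u) + ∑ k ∈ Finset.Icc 1 n, u⁻¹ ^ k := by
  induction n with
  | zero => simp
  | succ n ih =>
    rw [Finset.sum_Icc_succ_top n.succ_pos, ← add_assoc, ← ih, pow_succ]
    field_simp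
    ring

lemma jacobiTheta₂_term_mul_e2 (n : ℤ) (z w τ : ℂ) :
    jacobiTheta₂_term n z τ * e2 (n * w) = jacobiTheta₂_term n (z + w) τ := by
  rw [jacobiTheta₂_term_eq_e2, jacobiTheta₂_term_eq_e2, ← e2_add]
  ring_nf

lemma appellTerm_sub_natCast {M : ℕ} (hp : ¬InLattice τ p) (c : ℂ) (N : ℕ) (s : ℤ) :
    appellTerm (M * τ) τ c (p + N * τ) (s - N) =
      e2 (-N * c + M * N ^ 2 * τ / 2 + M * N * p) * (appellTerm (M * τ) τ c p s +
        ∑ k ∈ Finset.Icc 1 (M * N), e2 (-k * p) * jacobiTheta₂_term s (c - k * τ) (M * τ)) := by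
  have hpow (k : ℕ) : (e2 (p + s * τ))⁻¹ ^ k = e2 (-k * p) * e2 (s * (-k * τ)) := by
    rw [← e2_neg, e2_pow, ← e2_add]
    ring_nf
  have hterm : jacobiTheta₂_term (s - N) c (M * τ) = e2 (-N * c + M * N ^ 2 * τ / 2 + M * N * p) *
      (jacobiTheta₂_term s c (M * τ) * (e2 (p + s * τ))⁻¹ ^ (M * N)) := by
    rw [hpow, jacobiTheta₂_term_eq_e2, jacobiTheta₂_term_eq_e2, ← e2_add, ← e2_add, ← e2_add]
    push_cast
    ring_nf
  have hgeom := inv_pow_div_one_sub (e2_ne_zero _) (one_sub_e2_ne_zero hp s) (M * N)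
  simp only [hpow] at hgeom hterm
  have harg : p + N * τ + ((s - N : ℤ) : ℂ) * τ = p + s * τ := by
    push_cast
    ring
  have hsum : ∑ k ∈ Finset.Icc 1 (M * N), e2 (-k * p) * jacobiTheta₂_term s (c - k * τ) (M * τ) =
      jacobiTheta₂_term s c (M * τ) *
        ∑ k ∈ Finset.Icc 1 (M * N), e2 (-k * p) * e2 (s * (-k * τ)) := by
    simp only [Finset.mul_sum, sub_eq_add_neg c, ← neg_mul, ← jacobiTheta₂_term_mul_e2,
      mul_left_comm]
  rw [appellTerm, appellTerm, hterm, harg, hsum]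
  linear_combination e2 (-N * c + M * N ^ 2 * τ / 2 + M * N * p) *
    jacobiTheta₂_term s c (M * τ) * hgeom

lemma appellSum_add_natCast_mul {M : ℕ} (hM : 0 < M) (hτ : 0 < τ.im) (hp : ¬InLattice τ p)
    (c : ℂ) (N : ℕ) : appellSum (M * τ) τ c (p + N * τ) =
      e2 (-N * c + M * N ^ 2 * τ / 2 + M * N * p) * (appellSum (M * τ) τ c p +
        ∑ k ∈ Finset.Icc 1 (M * N), e2 (-k * p) * jacobiTheta₂ (c - k * τ) (M * τ)) := by
  have hσ : 0 < (M * τ).im := im_natCast_mul_pos hM hτ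
  have hsum (k : ℕ) := (hasSum_jacobiTheta₂_term (c - k * τ) hσ).mul_left (e2 (-k * p))
  rw [appellSum, ← (Equiv.subRight (N : ℤ)).tsum_eq]
  simp only [Equiv.subRight_apply, appellTerm_sub_natCast hp]
  have happell := (summable_appellTerm hσ hτ c p).hasSum
  exact ((happell.add (hasSum_sum fun k _ ↦ hsum k)).mul_left _).tsum_eq

/-- The summand `q^{(μ+1)j² - k²/(4μ)} e^{2πi(jd + (μj - k/2)x)} [θ_{k,μ} - θ_{-k,μ}](τ, y)` of the
double sum in the identity. Its factor `[θ_{k,μ} - θ_{-k,μ}](τ, p - r)` measures how far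
`Φ^{[μ,0]}(τ, p, -r, 0)` is from being quasi-periodic in `(p, r)`. -/
def thetaCorrection (μ τ d x y j k : ℂ) : ℂ :=
  e2 (((μ + 1) * j ^ 2 - k ^ 2 / (4 * μ)) * τ + j * d + (2 * μ * j - k) * x / 2) *
    (jTheta k μ τ y - jTheta (-k) μ τ y)

variable {M : ℕ} {μ : ℂ}

lemma appellDiff_add_natCast_mul (hM : 0 < M) (hμ : (M : ℂ) = 2 * μ) (hτ : 0 < τ.im)
    (hp : ¬InLattice τ p) (hr : ¬InLattice τ r) (N : ℕ) :
    appellDiff (2 * μ * τ) τ (μ * (p - r)) (p + N * τ) (r + N * τ) =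
      e2 (μ * N ^ 2 * τ + μ * N * (p + r)) * (appellDiff (2 * μ * τ) τ (μ * (p - r)) p r -
        ∑ k ∈ Finset.Icc 1 (M * N), e2 (-k * (p + r) / 2 - k ^ 2 / (4 * μ) * τ) *
          (jTheta k μ τ (p - r) - jTheta (-k) μ τ (p - r))) := by
  have hμ0 : μ ≠ 0 := by
    rintro rfl
    rw [mul_zero, Nat.cast_eq_zero] at hμ
    exact hM.ne' hμ
  have hθ (k : ℕ) : e2 (-k * (p + r) / 2 - k ^ 2 / (4 * μ) * τ) *
      (jTheta k μ τ (p - r) - jTheta (-k) μ τ (p - r)) =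
      e2 (-k * r) * jacobiTheta₂ (-(μ * (p - r)) - k * τ) (M * τ) -
        e2 (-k * p) * jacobiTheta₂ (μ * (p - r) - k * τ) (M * τ) := by
    rw [hμ, jTheta_eq_jacobiTheta₂ _ hμ0, jTheta_eq_jacobiTheta₂ _ hμ0, mul_sub, ← mul_assoc,
      ← mul_assoc, ← e2_add, ← e2_add, ← neg_add', jacobiTheta₂_neg_left]
    ring_nf
  rw [appellDiff, appellDiff, ← hμ, appellSum_add_natCast_mul hM hτ hp,
    appellSum_add_natCast_mul hM hτ hr]
  simp only [hθ, Finset.sum_sub_distrib]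
  have hp' : e2 (-N * (μ * (p - r)) + M * N ^ 2 * τ / 2 + M * N * p) =
      e2 (μ * N ^ 2 * τ + μ * N * (p + r)) := by
    rw [hμ]
    ring_nf
  have hr' : e2 (-N * -(μ * (p - r)) + M * N ^ 2 * τ / 2 + M * N * r) =
      e2 (μ * N ^ 2 * τ + μ * N * (p + r)) := by
    rw [hμ]
    ring_nf
  rw [hp', hr']
  ring

lemma jacobiTheta₂_term_mul_appellDiff (hM : 0 < M) (hμ : (M : ℂ) = 2 * μ) (hτ : 0 < τ.im)
    (hp : ¬InLattice τ p) (hr : ¬InLattice τ r) (d : ℂ) (N : ℕ) :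
    jacobiTheta₂_term N d (2 * τ) *
        appellDiff (2 * μ * τ) τ (μ * (p - r)) (p + N * τ) (r + N * τ) =
      jacobiTheta₂_term N (d + μ * (p + r)) (2 * (μ + 1) * τ) *
          appellDiff (2 * μ * τ) τ (μ * (p - r)) p r -
        ∑ k ∈ Finset.Icc 1 (M * N), thetaCorrection μ τ d (p + r) (p - r) N k := by
  have hterm : jacobiTheta₂_term N (d + μ * (p + r)) (2 * (μ + 1) * τ) =
      jacobiTheta₂_term N d (2 * τ) * e2 (μ * N ^ 2 * τ + μ * N * (p + r)) := by
    rw [jacobiTheta₂_term_eq_e2, jacobiTheta₂_term_eq_e2, ← e2_add]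
    push_cast
    ring_nf
  have hsummand (k : ℕ) : thetaCorrection μ τ d (p + r) (p - r) N k =
      jacobiTheta₂_term N (d + μ * (p + r)) (2 * (μ + 1) * τ) *
        (e2 (-k * (p + r) / 2 - k ^ 2 / (4 * μ) * τ) *
          (jTheta k μ τ (p - r) - jTheta (-k) μ τ (p - r))) := by
    rw [thetaCorrection, jacobiTheta₂_term_eq_e2, ← mul_assoc, ← e2_add]
    push_cast
    ring_nf
  rw [appellDiff_add_natCast_mul hM hμ hτ hp hr]
  simp only [hsummand, ← Finset.mul_sum, hterm]
  ring

lemma jacobiTheta₂_term_neg_mul_appellDiff (hM : 0 < M) (hμ : (M : ℂ) = 2 * μ) (hτ : 0 < τ.im)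
    (hp : ¬InLattice τ p) (hr : ¬InLattice τ r) (d : ℂ) (N : ℕ) :
    jacobiTheta₂_term (-N) d (2 * τ) * appellDiff (2 * μ * τ) τ (μ * (p - r))
        (p + (-N : ℤ) * τ) (r + (-N : ℤ) * τ) =
      jacobiTheta₂_term (-N) (d + μ * (p + r)) (2 * (μ + 1) * τ) *
          appellDiff (2 * μ * τ) τ (μ * (p - r)) p r -
        ∑ k ∈ Finset.Icc 1 (M * N), thetaCorrection μ τ (-d) (-(p + r)) (p - r) N k := by
  have hσ : 0 < (2 * μ * τ).im := hμ ▸ im_natCast_mul_pos hM hτ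
  have hshift {z : ℂ} (hz : ¬InLattice τ z) : ¬InLattice τ (z + (-N : ℤ) * τ) :=
    (inLattice_add_int_mul_iff _).not.2 hz
  have hadd (z : ℂ) : -(z + (-N : ℤ) * τ) = -z + N * τ := by
    push_cast
    ring
  have hpos := jacobiTheta₂_term_mul_appellDiff hM hμ hτ (inLattice_neg_iff.not.2 hr)
    (inLattice_neg_iff.not.2 hp) (-d) N
  rw [neg_sub_neg, appellDiff_neg_neg hσ hτ hp hr, ← hadd, ← hadd,
    appellDiff_neg_neg hσ hτ (hshift hp) (hshift hr)] at hpos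
  rw [jacobiTheta₂_term_neg, jacobiTheta₂_term_neg, hpos]
  ring_nf

end QuasiPeriodicity

section Rearrangement

/-- The theta-weighted sum `∑ n, e ^ (2πind + πin²σ') A(p + nτ)` of Appell–Lerch sums
`A = appellSum σ τ c`. -/
def thetaAppellSum (σ σ' τ c d p : ℂ) : ℂ :=
  ∑' n : ℤ, jacobiTheta₂_term n d σ' * appellSum σ τ c (p + n * τ)

variable {σ σ' τ p r : ℂ}

lemma summable_jacobiTheta₂_term_mul_appellTerm (hσ : 0 < σ.im) (hσ' : 0 < σ'.im) (hτ : 0 < τ.im)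
    (c d p : ℂ) : Summable fun x : ℤ × ℤ ↦
      jacobiTheta₂_term x.1 d σ' * appellTerm σ τ c (p + x.1 * τ) x.2 := by
  obtain ⟨C, hC⟩ := exists_norm_one_sub_e2_inv_le hτ p
  have hprod := ((summable_jacobiTheta₂_term_iff d σ').2 hσ').norm.mul_of_nonneg
    ((summable_jacobiTheta₂_term_iff c σ).2 hσ).norm (fun _ ↦ norm_nonneg _) fun _ ↦ norm_nonneg _
  refine .of_norm_bounded (hprod.mul_right C) fun ⟨n, s⟩ ↦ ?_
  have hden : p + n * τ + s * τ = p + (n + s : ℤ) * τ := by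
    push_cast
    ring
  rw [appellTerm, hden, div_eq_mul_inv, ← mul_assoc, norm_mul, norm_mul]
  gcongr
  exact hC _

lemma summable_jacobiTheta₂_term_mul_appellSum (hσ : 0 < σ.im) (hσ' : 0 < σ'.im) (hτ : 0 < τ.im)
    (c d p : ℂ) :
    Summable fun n : ℤ ↦ jacobiTheta₂_term n d σ' * appellSum σ τ c (p + n * τ) := by
  simpa only [appellSum, tsum_mul_left] using
    (summable_jacobiTheta₂_term_mul_appellTerm hσ hσ' hτ c d p).prod

/-- Both sides are the sum over `(n, s)` of
`e ^ (2πi(nd + sc) + πi(n²σ' + s²σ)) / (1 - e ^ (2πi(p + (n + s)τ)))`. -/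
lemma thetaAppellSum_comm (hσ : 0 < σ.im) (hσ' : 0 < σ'.im) (hτ : 0 < τ.im) (c d p : ℂ) :
    thetaAppellSum σ σ' τ c d p = thetaAppellSum σ' σ τ d c p := by
  have hsummable : Summable (Function.uncurry fun n s : ℤ ↦
      jacobiTheta₂_term n d σ' * appellTerm σ τ c (p + n * τ) s) :=
    summable_jacobiTheta₂_term_mul_appellTerm hσ hσ' hτ c d p
  simp only [thetaAppellSum, appellSum, ← tsum_mul_left]
  rw [← hsummable.tsum_comm]
  refine tsum_congr fun s ↦ tsum_congr fun n ↦ ?_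
  rw [appellTerm, appellTerm, add_right_comm]
  ring

lemma thetaAppellSum_sub_thetaAppellSum (hσ : 0 < σ.im) (hτ : 0 < τ.im) (hp : ¬InLattice τ p)
    (hr : ¬InLattice τ r) (c : ℂ) :
    thetaAppellSum σ (2 * τ) τ c (p - r) p - thetaAppellSum σ (2 * τ) τ c (-(p - r)) r =
      mumfordQuotient τ p r * jacobiTheta₂ (c + (p + r)) (σ + 2 * τ) := by
  have hτ2 : 0 < (2 * τ).im := by simpa using hτ
  have hsummable := summable_jacobiTheta₂_term_mul_appellSum hτ2 hσ hτ
  rw [thetaAppellSum_comm hσ hτ2 hτ, thetaAppellSum_comm hσ hτ2 hτ, thetaAppellSum, thetaAppellSum,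
    ← (hsummable _ _ _).tsum_sub (hsummable _ _ _), jacobiTheta₂, ← tsum_mul_left]
  refine tsum_congr fun s ↦ ?_
  have hcore := appellDiff_two_mul hτ ((inLattice_add_int_mul_iff s).not.2 hp)
    ((inLattice_add_int_mul_iff s).not.2 hr)
  rw [appellDiff, add_sub_add_right_eq_sub, mumfordQuotient_add_int_mul] at hcore
  have hterm : jacobiTheta₂_term s c σ * e2 (s * (p + r) + s ^ 2 * τ) =
      jacobiTheta₂_term s (c + (p + r)) (σ + 2 * τ) := by
    rw [jacobiTheta₂_term_eq_e2, jacobiTheta₂_term_eq_e2, ← e2_add]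
    ring_nf
  rw [← mul_sub, hcore, ← mul_assoc, hterm, mul_comm]

end Rearrangement

section DoubleSum

variable {τ p r μ : ℂ} {M : ℕ}

lemma hasSum_jacobiTheta₂_term_mul_appellDiff {σ σ' : ℂ} (hσ : 0 < σ.im) (hσ' : 0 < σ'.im)
    (hτ : 0 < τ.im) (c d p r : ℂ) :
    HasSum (fun n : ℤ ↦ jacobiTheta₂_term n d σ' * appellDiff σ τ c (p + n * τ) (r + n * τ))
      (thetaAppellSum σ σ' τ c d p - thetaAppellSum σ σ' τ (-c) d r) := by
  have hsummable := summable_jacobiTheta₂_term_mul_appellSum hσ hσ' hτ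
  simpa only [thetaAppellSum, appellDiff, mul_sub] using
    (hsummable c d p).hasSum.sub (hsummable (-c) d r).hasSum

lemma hasSum_thetaCorrection (hM : 0 < M) (hμ : (M : ℂ) = 2 * μ) (hτ : 0 < τ.im)
    (hp : ¬InLattice τ p) (hr : ¬InLattice τ r) (d : ℂ) :
    HasSum (fun j : ℕ ↦ ∑ k ∈ Finset.Icc 1 (M * (j + 1)),
        (thetaCorrection μ τ d (p + r) (p - r) (j + 1) k +
          thetaCorrection μ τ (-d) (-(p + r)) (p - r) (j + 1) k))
      (jacobiTheta₂ (d + μ * (p + r)) (2 * (μ + 1) * τ) *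
          appellDiff (2 * μ * τ) τ (μ * (p - r)) p r -
        (thetaAppellSum (2 * μ * τ) (2 * τ) τ (μ * (p - r)) d p -
          thetaAppellSum (2 * μ * τ) (2 * τ) τ (-(μ * (p - r))) d r)) := by
  have hσ : 0 < (2 * μ * τ).im := hμ ▸ im_natCast_mul_pos hM hτ
  have hτ2 : 0 < (2 * τ).im := im_natCast_mul_pos two_pos hτ
  have hρ : 0 < (2 * (μ + 1) * τ).im := by
    rw [mul_add_one, add_mul, add_im]
    exact add_pos hσ hτ2
  have hdiff := ((hasSum_jacobiTheta₂_term (d + μ * (p + r)) hρ).mul_right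
    (appellDiff (2 * μ * τ) τ (μ * (p - r)) p r)).sub
      (hasSum_jacobiTheta₂_term_mul_appellDiff hσ hτ2 hτ (μ * (p - r)) d p r)
  have hpos (N : ℕ) := jacobiTheta₂_term_mul_appellDiff hM hμ hτ hp hr d N
  have hneg (N : ℕ) := jacobiTheta₂_term_neg_mul_appellDiff hM hμ hτ hp hr d N
  have hnat := hdiff.nat_add_neg
  simp only [Int.cast_natCast, hpos, hneg, sub_sub_cancel, ← Finset.sum_add_distrib] at hnat
  simpa [jacobiTheta₂_term] using (hasSum_nat_add_iff' 1).2 hnat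

lemma thetaCorrection_sub_thetaCorrection (μ τ d x x' y j k : ℂ) :
    thetaCorrection μ τ d x y j k + thetaCorrection μ τ (-d) (-x) y j k -
        (thetaCorrection μ τ d x' y j k + thetaCorrection μ τ (-d) (-x') y j k) =
      qpow τ ((μ + 1) * j ^ 2) * qpow τ (-k ^ 2 / (4 * μ)) *
        (e2 (j * d) * exp (Real.pi * I * (2 * μ * j - k) * x) +
          e2 (-(j * d)) * exp (-(Real.pi * I) * (2 * μ * j - k) * x) -
          e2 (j * d) * exp (Real.pi * I * (2 * μ * j - k) * x') -
          e2 (-(j * d)) * exp (-(Real.pi * I) * (2 * μ * j - k) * x')) *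
        (jTheta k μ τ y - jTheta (-k) μ τ y) := by
  have hpos (x : ℂ) : thetaCorrection μ τ d x y j k =
      qpow τ ((μ + 1) * j ^ 2) * qpow τ (-k ^ 2 / (4 * μ)) *
        (e2 (j * d) * exp (Real.pi * I * (2 * μ * j - k) * x)) *
        (jTheta k μ τ y - jTheta (-k) μ τ y) := by
    simp only [thetaCorrection, e2, qpow, ← exp_add]
    ring_nf
  have hneg (x : ℂ) : thetaCorrection μ τ (-d) (-x) y j k =
      qpow τ ((μ + 1) * j ^ 2) * qpow τ (-k ^ 2 / (4 * μ)) *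
        (e2 (-(j * d)) * exp (-(Real.pi * I) * (2 * μ * j - k) * x)) *
        (jTheta k μ τ y - jTheta (-k) μ τ y) := by
    simp only [thetaCorrection, e2, qpow, ← exp_add]
    ring_nf
  rw [hpos, hpos, hneg, hneg]
  ring

lemma jacobiTheta₂_mul_Phi_sub_add_tsum (hM : 0 < M) (hμ : (M : ℂ) = 2 * μ) (hτ : 0 < τ.im)
    {z1 z2 z3 w : ℂ} (h1 : ¬InLattice τ z1) (h2 : ¬InLattice τ z2) (h3 : ¬InLattice τ z3)
    (hw : ¬InLattice τ w) (hz : z1 - z2 - z3 = w) :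
    jacobiTheta₂ (z1 - z2 + μ * (z1 + z3)) (2 * (μ + 1) * τ) * Phi μ 0 τ z1 (-z3) 0 -
        jacobiTheta₂ (z1 - z2 + μ * (w - z2)) (2 * (μ + 1) * τ) * Phi μ 0 τ z2 w 0 +
        ∑' j : ℕ, ∑ k ∈ Finset.Icc 1 (M * (j + 1)),
          (thetaCorrection μ τ (z1 - z2) (w - z2) (z1 - z3) (j + 1) k +
            thetaCorrection μ τ (-(z1 - z2)) (-(w - z2)) (z1 - z3) (j + 1) k -
            (thetaCorrection μ τ (z1 - z2) (z1 + z3) (z1 - z3) (j + 1) k +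
              thetaCorrection μ τ (-(z1 - z2)) (-(z1 + z3)) (z1 - z3) (j + 1) k)) =
      mumfordQuotient τ z1 z2 * jacobiTheta₂ (z1 + z2 + μ * (z1 - z3)) (2 * (μ + 1) * τ) -
        mumfordQuotient τ z3 (-w) * jacobiTheta₂ (w - z3 + μ * (z1 - z3)) (2 * (μ + 1) * τ) := by
  have hσ : 0 < (2 * μ * τ).im := hμ ▸ im_natCast_mul_pos hM hτ
  have hw' : ¬InLattice τ (-w) := inLattice_neg_iff.not.2 hw
  have hx : z2 + -w = -(w - z2) := by ring
  have hy : z2 - -w = z1 - z3 := by linear_combination -hz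
  have hd : z3 - -w = z1 - z2 := by linear_combination -hz
  have hΦ : Phi μ 0 τ z2 w 0 = appellDiff (2 * μ * τ) τ (μ * (z2 - -w)) z2 (-w) := by
    rw [← Phi_eq_appellDiff, neg_neg]
  have hsum1 := hasSum_thetaCorrection hM hμ hτ h1 h3 (z1 - z2)
  have hsum2 := hasSum_thetaCorrection hM hμ hτ h2 hw' (-(z1 - z2))
  have hsum := (hsum2.sub hsum1).tsum_eq
  have hleft := thetaAppellSum_sub_thetaAppellSum hσ hτ h1 h2 (μ * (z1 - z3))
  have hright := thetaAppellSum_sub_thetaAppellSum hσ hτ h3 hw' (-(μ * (z1 - z3)))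
  have hmod : 2 * (μ + 1) * τ = 2 * μ * τ + 2 * τ := by ring
  have heven2 : -(z1 - z2) + μ * -(w - z2) = -(z1 - z2 + μ * (w - z2)) := by ring
  have heven3 : -(μ * (z1 - z3)) + (z3 + -w) = -(w - z3 + μ * (z1 - z3)) := by ring
  simp only [← Finset.sum_sub_distrib, hx, hy, neg_neg, heven2, jacobiTheta₂_neg_left,
    add_comm (thetaCorrection _ _ (-_) _ _ _ _)] at hsum
  rw [hd, heven3, jacobiTheta₂_neg_left, ← hmod] at hright
  rw [add_comm _ (z1 + z2), ← hmod] at hleft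
  rw [hΦ, Phi_eq_appellDiff, hy]
  linear_combination hsum + hleft - hright

end DoubleSum

theorem statement11 (m : ℝ) (M : ℕ) (hM : 0 < M) (hm : m = M / 2)
    (τ : ℂ) (hτ : 0 < τ.im) (z1 z2 z3 : ℂ)
    (h1 : ¬ InLattice τ z1) (h2 : ¬ InLattice τ z2) (h3 : ¬ InLattice τ z3)
    (h4 : ¬ InLattice τ (z1 - z2 - z3)) :
    jTheta 0 ((m : ℂ) + 1) τ (((z1 - z2) + (m : ℂ) * (z1 + z3)) / ((m : ℂ) + 1)) *
          Phi (m : ℂ) 0 τ z1 (-z3) 0 -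
        jTheta 0 ((m : ℂ) + 1) τ
            (((z1 - z2) + (m : ℂ) * (z1 - 2 * z2 - z3)) / ((m : ℂ) + 1)) *
          Phi (m : ℂ) 0 τ z2 (z1 - z2 - z3) 0 +
        ∑' j : ℕ, ∑ k ∈ Finset.Icc 1 (M * (j + 1)),
          qpow τ (((m : ℂ) + 1) * ((j : ℂ) + 1) ^ 2) *
            qpow τ (-((k : ℂ) ^ 2) / (4 * (m : ℂ))) *
            (e2 (((j : ℂ) + 1) * (z1 - z2)) *
                Complex.exp (Real.pi * Complex.I *
                  (2 * (m : ℂ) * ((j : ℂ) + 1) - (k : ℂ)) * (z1 - 2 * z2 - z3)) +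
              e2 (-(((j : ℂ) + 1) * (z1 - z2))) *
                Complex.exp (-(Real.pi * Complex.I) *
                  (2 * (m : ℂ) * ((j : ℂ) + 1) - (k : ℂ)) * (z1 - 2 * z2 - z3)) -
              e2 (((j : ℂ) + 1) * (z1 - z2)) *
                Complex.exp (Real.pi * Complex.I *
                  (2 * (m : ℂ) * ((j : ℂ) + 1) - (k : ℂ)) * (z1 + z3)) -
              e2 (-(((j : ℂ) + 1) * (z1 - z2))) *
                Complex.exp (-(Real.pi * Complex.I) *
                  (2 * (m : ℂ) * ((j : ℂ) + 1) - (k : ℂ)) * (z1 + z3))) *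
            (jTheta (k : ℂ) (m : ℂ) τ (z1 - z3) - jTheta (-(k : ℂ)) (m : ℂ) τ (z1 - z3)) =
      Complex.I *
          jTheta 0 ((m : ℂ) + 1) τ (((z1 + z2) + (m : ℂ) * (z1 - z3)) / ((m : ℂ) + 1)) *
          (eta τ ^ 3 * mumford 1 1 τ (z1 - z2) /
            (mumford 1 1 τ z1 * mumford 1 1 τ z2)) +
        Complex.I *
          jTheta 0 ((m : ℂ) + 1) τ
            (((z1 - z2 - 2 * z3) + (m : ℂ) * (z1 - z3)) / ((m : ℂ) + 1)) *
          (eta τ ^ 3 * mumford 1 1 τ (z1 - z2) /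
            (mumford 1 1 τ z3 * mumford 1 1 τ (z1 - z2 - z3))) := by
  have hμ : (M : ℂ) = 2 * m := by
    rw [hm]
    push_cast
    ring
  have hμ1 : (m : ℂ) + 1 ≠ 0 := by
    rw [hm]
    norm_cast
    positivity
  have hmain := jacobiTheta₂_mul_Phi_sub_add_tsum hM hμ hτ h1 h2 h3 h4 rfl
  rw [mumfordQuotient_neg_right hτ, add_sub_cancel, mumfordQuotient] at hmain
  simp only [thetaCorrection_sub_thetaCorrection] at hmain
  have hx : z1 - 2 * z2 - z3 = z1 - z2 - z3 - z2 := by ring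
  have hy : z1 - z2 - 2 * z3 = z1 - z2 - z3 - z3 := by ring
  rw [hx, hy]
  simp only [jTheta_zero_div hμ1]
  linear_combination hmain

end Wakimoto
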